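/- For all words u, v ∈ Σ*, the binary literal shuffle is commutative: ⧢₂²(u, v) = ⧢₂²(v, u). -/

import Mathlib

/-!
Write the paddings of `u` and `v` as `a = $^k u $^r` and `b = $^l v $^s`, of common length `2N`.
Two perfect interleavings that start with different words differ only at their ends:
`x · I(a, b y) = I(x b, a) · y` whenever `|a| = |b| + 1`. With `x = y = $` and after erasing
dollars, this says that `(a, b $)` and `($ b, a)` give the same word
(`erasedInterleave_rotate`). Hence:

* if `s > 0`, shifting `v` one place to the right gives a padding that may be read before that
  of `u`;
* if `k > 0`, shifting `u` one place to the left does the same;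
* if `k = s = 0`, then `a = u $^r` and `b = $^l v` with `|u| ≤ N ≤ l`, so no column contains
  two letters, and both reading orders give `u v` (`erasedInterleave_separated`).

This proves `⧢₂²(u, v) ⊆ ⧢₂²(v, u)`, and the other inclusion is the same statement with
`u` and `v` exchanged.
-/

/-!
Common definitions.

Words over an alphabet `β` are modelled as `List β`.  The alphabet
`Σ ∪ {$}` is modelled as `Option β`, where `none` plays the role of the
dollar sign `$` and `some x` the role of a letter `x ∈ Σ`.  The erasing
homomorphism `h` (with `h($) = ε`, `h(x) = x`) is `List.reduceOption`.
-/

/-- Perfect interleaving `I(v₁, …, vₙ)` of equal-length words, read column-wise. -/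
def interleave {β : Type*} (vs : List (List β)) : List β :=
  vs.transpose.flatten

/-- `$^k u $^r`, the two-sided dollar padding of the word `u`. -/
def dollarPad {β : Type*} (k : ℕ) (u : List β) (r : ℕ) : List (Option β) :=
  List.replicate k none ++ u.map some ++ List.replicate r none

/-- The `n`-ary initial literal shuffle `⧢₁ⁿ(u₁, …, uₙ)`:
pad each word with a fresh symbol (`none`) to the maximal length `N`,
interleave, and erase the fresh symbols. -/
def shuffle1 {β : Type*} {n : ℕ} (us : Fin n → List β) : List β :=
  (interleave (List.ofFn fun i =>
    (us i).map some ++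
      List.replicate ((Finset.univ.sup fun j => (us j).length) - (us i).length)
        (none : Option β))).reduceOption

/-- The `n`-ary literal shuffle `⧢₂ⁿ(u₁, …, uₙ)`:
all erased interleavings of paddings `$^k uᵢ $^{r-k}` with `r = n·N - |uᵢ|`. -/
def shuffle2 {β : Type*} {n : ℕ} (us : Fin n → List β) : Set (List β) :=
  { w | ∃ k : Fin n → ℕ,
      (∀ i, k i ≤ n * (Finset.univ.sup fun j => (us j).length) - (us i).length) ∧
      w = (interleave (List.ofFn fun i =>
        dollarPad (k i) (us i)
          (n * (Finset.univ.sup fun j => (us j).length) - (us i).length - k i))).reduceOption }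

/-- Extension of `⧢₁ⁿ` to languages. -/
def shuffle1L {β : Type*} {n : ℕ} (Ls : Fin n → Set (List β)) : Set (List β) :=
  { w | ∃ us : Fin n → List β, (∀ i, us i ∈ Ls i) ∧ w = shuffle1 us }

/-- Extension of `⧢₂ⁿ` to languages. -/
def shuffle2L {β : Type*} {n : ℕ} (Ls : Fin n → Set (List β)) : Set (List β) :=
  { w | ∃ us : Fin n → List β, (∀ i, us i ∈ Ls i) ∧ w ∈ shuffle2 us }

/-- Iterated version `L^{⧢₁,*} = {ε} ∪ ⋃_{n ≥ 1} ⧢₁ⁿ(L, …, L)`. -/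
def itShuffle1 {β : Type*} (L : Set (List β)) : Set (List β) :=
  {([] : List β)} ∪ ⋃ (n : ℕ) (_ : 1 ≤ n), shuffle1L (fun _ : Fin n => L)

/-- Iterated version `L^{⧢₂,*} = {ε} ∪ ⋃_{n ≥ 1} ⧢₂ⁿ(L, …, L)`. -/
def itShuffle2 {β : Type*} (L : Set (List β)) : Set (List β) :=
  {([] : List β)} ∪ ⋃ (n : ℕ) (_ : 1 ≤ n), shuffle2L (fun _ : Fin n => L)

/-- `IsShuffle u v w` : `w` is an interleaving of `u` and `v`
(ordinary shuffle of words). -/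
inductive IsShuffle {β : Type*} : List β → List β → List β → Prop
  | nil : IsShuffle [] [] []
  | left {a : β} {u v w : List β} : IsShuffle u v w → IsShuffle (a :: u) v (a :: w)
  | right {a : β} {u v w : List β} : IsShuffle u v w → IsShuffle u (a :: v) (a :: w)

/-- Ordinary shuffle of languages `U ⧢ V`. -/
def shuffleL {β : Type*} (U V : Set (List β)) : Set (List β) :=
  { w | ∃ u ∈ U, ∃ v ∈ V, IsShuffle u v w }

/-- `n`-fold ordinary shuffle `L₁ ⧢ ⋯ ⧢ Lₙ` (iterated binary shuffle;
`{ε}` is the neutral element). -/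
def shuffleN {β : Type*} {n : ℕ} (Ls : Fin n → Set (List β)) : Set (List β) :=
  (List.ofFn Ls).foldr shuffleL {([] : List β)}

/-- Iterated ordinary shuffle closure `L^{⧢,*}`. -/
def itShuffleO {β : Type*} (L : Set (List β)) : Set (List β) :=
  {([] : List β)} ∪ ⋃ (n : ℕ) (_ : 1 ≤ n), shuffleN (fun _ : Fin n => L)

/-- Bérard's binary initial literal shuffle of languages. -/
def berardShuffle1 {β : Type*} (U V : Set (List β)) : Set (List β) :=
  { w | (∃ x y v, x ++ y ∈ U ∧ v ∈ V ∧ x.length = v.length ∧ w = interleave [x, v] ++ y) ∨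
        (∃ u x y, u ∈ U ∧ x ++ y ∈ V ∧ x.length = u.length ∧ w = interleave [u, x] ++ y) }

/-- A three-letter alphabet `Σ = {a, b, c}`. -/
inductive ABC : Type
  | a | b | c
deriving DecidableEq

/-- `h(I(a, b))` for two words, by recursion on the columns. Letters beyond the length of the
shorter word are dropped, so it agrees with `interleave` only for words of the same length. -/
def erasedInterleave {β : Type*} : List (Option β) → List (Option β) → List β
  | x :: a, y :: b => [x, y].reduceOption ++ erasedInterleave a b
  | _, _ => []

/-- The stateful traversal in `List.transpose`, run on the one-letter columns of `b` with the
letters of `a` to be consumed: it puts each letter of `a` on top of the corresponding column. -/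
theorem mapM_pop_singletons {β : Type*} :
    ∀ a b : List β, a.length = b.length →
      (List.mapM' (m := StateM (List β)) List.transpose.pop (b.map fun y => [y])) a =
        (List.zipWith (fun x y => [x, y]) a b, ([] : List β))
  | [], [], _ => rfl
  | x :: a, y :: b, h => by
      have ih := mapM_pop_singletons a b (by simpa using h)
      simp only [List.map_cons, List.mapM'_cons, List.zipWith_cons_cons]
      change (fun p : List (List β) × List β => ([x, y] :: p.1, p.2))
        ((List.mapM' (m := StateM (List β)) List.transpose.pop (b.map fun y => [y])) a) = _
      rw [ih]

theorem transpose_pair {β : Type*} (a b : List β) (h : a.length = b.length) :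
    [a, b].transpose = List.zipWith (fun x y => [x, y]) a b := by
  have hb : List.transpose.go b #[] = (b.map fun y => [y]).toArray := by
    simp [List.transpose.go]
    change #[] ++ _ = _
    simp
  have hm : (Array.mapM (m := StateM (List β)) List.transpose.pop (b.map fun y => [y]).toArray) a =
      ((List.zipWith (fun x y => [x, y]) a b).toArray, ([] : List β)) := by
    rw [List.mapM_toArray, ← List.mapM'_eq_mapM]
    change (fun p : List (List β) × List β => (p.1.toArray, p.2))
        ((List.mapM' (m := StateM (List β)) List.transpose.pop (b.map fun y => [y])) a) = _
    rw [mapM_pop_singletons a b h]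
  simp only [List.transpose, List.foldr, hb]
  simp [List.transpose.go, hm]

theorem reduceOption_interleave_pair {β : Type*} (a b : List (Option β))
    (h : a.length = b.length) :
    (interleave [a, b]).reduceOption = erasedInterleave a b := by
  rw [interleave, transpose_pair a b h]
  clear h
  induction a generalizing b with
  | nil => simp [erasedInterleave]
  | cons x a ih =>
    cases b with
    | nil => simp [erasedInterleave]
    | cons y b =>
      rw [List.zipWith_cons_cons, List.flatten_cons, List.reduceOption_append, ih,
        erasedInterleave]

/-- `h(x · I(a, b y)) = h(I(x b, a) · y)`: exchanging the order of the two words in every column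
amounts to moving the second one by one place. -/
theorem erasedInterleave_rotate_aux {β : Type*} (x y : Option β) (a b : List (Option β))
    (h : a.length = b.length + 1) :
    [x].reduceOption ++ erasedInterleave a (b ++ [y]) =
      erasedInterleave (x :: b) a ++ [y].reduceOption := by
  induction b generalizing x a with
  | nil =>
    obtain ⟨z, rfl⟩ := List.length_eq_one_iff.mp h
    cases x <;> cases y <;> cases z <;> simp [erasedInterleave, List.reduceOption]
  | cons w b ih =>
    cases a with
    | nil => simp at h
    | cons z a =>
      have := ih w a (by simpa using h)
      rw [List.cons_append, erasedInterleave, erasedInterleave, List.append_assoc, ← this]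
      cases x <;> cases w <;> cases z <;> simp [List.reduceOption]

theorem erasedInterleave_rotate {β : Type*} (a b : List (Option β))
    (h : a.length = b.length + 1) :
    erasedInterleave a (b ++ [none]) = erasedInterleave (none :: b) a := by
  simpa [List.reduceOption] using erasedInterleave_rotate_aux none none a b h

theorem erasedInterleave_append {β : Type*} (a b c d : List (Option β))
    (h : a.length = b.length) :
    erasedInterleave (a ++ c) (b ++ d) = erasedInterleave a b ++ erasedInterleave c d := by
  induction a generalizing b with
  | nil => obtain rfl := List.length_eq_zero_iff.mp h.symm; simp [erasedInterleave]
  | cons x a ih =>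
    cases b with
    | nil => simp at h
    | cons y b => simp [erasedInterleave, ih b (by simpa using h)]

theorem erasedInterleave_none_right {β : Type*} (a : List (Option β)) :
    erasedInterleave a (List.replicate a.length none) = a.reduceOption := by
  induction a with
  | nil => rfl
  | cons x a ih =>
    rw [List.length_cons, List.replicate_succ, erasedInterleave, ih]
    cases x <;> simp [List.reduceOption]

theorem erasedInterleave_none_left {β : Type*} (a : List (Option β)) :
    erasedInterleave (List.replicate a.length none) a = a.reduceOption := by
  induction a with
  | nil => rfl
  | cons x a ih =>
    rw [List.length_cons, List.replicate_succ, erasedInterleave, ih]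
    cases x <;> simp [List.reduceOption]

/-- If the letters of `a` all occur in earlier columns than those of `d`, the order in which the
two words are read is irrelevant. -/
theorem erasedInterleave_separated {β : Type*} (a d : List (Option β)) :
    erasedInterleave (a ++ List.replicate d.length none) (List.replicate a.length none ++ d) =
      erasedInterleave (List.replicate a.length none ++ d)
        (a ++ List.replicate d.length none) := by
  rw [erasedInterleave_append _ _ _ _ (by simp), erasedInterleave_append _ _ _ _ (by simp)]
  simp only [erasedInterleave_none_left, erasedInterleave_none_right]

theorem length_dollarPad {β : Type*} (k r : ℕ) (u : List β) :
    (dollarPad k u r).length = k + u.length + r := by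
  simp [dollarPad, Nat.add_assoc]

theorem dollarPad_succ_left {β : Type*} (k r : ℕ) (u : List β) :
    dollarPad (k + 1) u r = none :: dollarPad k u r := by
  simp [dollarPad, List.replicate_succ]

theorem dollarPad_succ_right {β : Type*} (k r : ℕ) (u : List β) :
    dollarPad k u (r + 1) = dollarPad k u r ++ [none] := by
  simp [dollarPad, List.replicate_succ']

/-- Binary literal shuffle in terms of all four padding lengths. -/
theorem mem_shuffle2_pair {β : Type*} (u v w : List β) :
    w ∈ shuffle2 ![u, v] ↔ ∃ k r l s : ℕ,
      k + u.length + r = 2 * max u.length v.length ∧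
      l + v.length + s = 2 * max u.length v.length ∧
      w = erasedInterleave (dollarPad k u r) (dollarPad l v s) := by
  have hN : (Finset.univ.sup fun j : Fin 2 => ((![u, v] : Fin 2 → List β) j).length) =
      max u.length v.length := by
    simp [Fin.univ_succ]
  simp only [shuffle2, hN, Set.mem_ofPred_eq, Fin.forall_fin_two, List.ofFn_succ, List.ofFn_zero,
    Matrix.cons_val_zero, Matrix.cons_val_one, Fin.succ_zero_eq_one]
  constructor
  · rintro ⟨k, ⟨h0, h1⟩, rfl⟩
    refine ⟨k 0, _, k 1, _, ?_, ?_, reduceOption_interleave_pair _ _ ?_⟩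
    · omega
    · omega
    · simp only [length_dollarPad]; omega
  · rintro ⟨k, r, l, s, h0, h1, rfl⟩
    refine ⟨![k, l], ⟨?_, ?_⟩, ?_⟩
    · simp; omega
    · simp; omega
    · simp only [Matrix.cons_val_zero, Matrix.cons_val_one]
      rw [show 2 * max u.length v.length - u.length - k = r by omega,
        show 2 * max u.length v.length - v.length - l = s by omega,
        reduceOption_interleave_pair _ _ (by simp only [length_dollarPad]; omega)]

theorem shuffle2_pair_subset {β : Type*} (u v : List β) :
    shuffle2 ![u, v] ⊆ shuffle2 ![v, u] := by
  intro w hw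
  rw [mem_shuffle2_pair] at hw ⊢
  obtain ⟨k, r, l, s, hu, hv, rfl⟩ := hw
  rw [max_comm v.length]
  rcases s with _ | s
  · rcases k with _ | k
    · -- `u` stands at the very left and `v` at the very right, in disjoint sets of columns.
      refine ⟨l, 0, 0, r, hv, hu, ?_⟩
      have hr : r = (l - u.length) + v.length := by omega
      have hl : l = u.length + (l - u.length) := by omega
      have := erasedInterleave_separated
        (u.map some ++ List.replicate (l - u.length) none) (v.map some)
      simp only [List.length_append, List.length_map, List.length_replicate, ← hl,
        List.append_assoc, List.replicate_append_replicate, ← hr] at this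
      simpa [dollarPad] using this
    · -- Shift `u` one place to the left.
      refine ⟨l, 0, k, r + 1, hv, by omega, ?_⟩
      rw [dollarPad_succ_left, dollarPad_succ_right]
      exact (erasedInterleave_rotate _ _ (by simp only [length_dollarPad]; omega)).symm
  · -- Shift `v` one place to the right.
    refine ⟨l + 1, s, k, r, by omega, hu, ?_⟩
    rw [dollarPad_succ_left, dollarPad_succ_right]
    exact erasedInterleave_rotate _ _ (by simp only [length_dollarPad]; omega)

/-- The binary literal shuffle is commutative:
`⧢₂²(u, v) = ⧢₂²(v, u)`. -/
theorem stmt7 {α : Type*} (u v : List α) :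
    shuffle2 ![u, v] = shuffle2 ![v, u] :=
  Set.Subset.antisymm (shuffle2_pair_subset u v) (shuffle2_pair_subset v u)
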